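/- Let P be the uniform probability distribution on the boundary L of the regular hexagon with vertices O(0,0), A₁(1,0), A₂(3/2,√3/2), A₃(1,√3), A₄(0,√3), A₅(−1/2,√3/2), and let n = 6k for a positive integer k. Set r = 2(√13(k−1)−4)/(13(k−1)²−16). Then the set αₙ = {(r/8, √3 r/8), (1−r/8, √3 r/8), ((6−r)/4, √3/2), (1−r/8, −√3(r−8)/8), (r/8, −√3(r−8)/8), ((r−2)/4, √3/2)} ∪ γ ∪ ⋃_{i=1}^5 T_i(γ) forms an optimal set of n-means, where γ = {(r + (2j−1)(1−2r)/(2(k−1)), 0) : j = 1, …, k−1} if k ≥ 2 and γ = ∅ if k = 1, and where T_i (1 ≤ i ≤ 5) is the rotation of ℝ² about the center (1/2, √3/2) of the hexagon by angle iπ/3 (so that T_i maps the side OA₁ onto A_iA_{i+1} for 1 ≤ i ≤ 4 and onto A₅O for i = 5). Moreover, the quantization error is Vₙ(P) = 13(13(k−1)² − 8√13(k−1) + 16)/(12(16 − 13(k−1)²)²). -/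

import Mathlib

open MeasureTheory Real Filter
open scoped ENNReal

noncomputable section

/-- The plane `ℝ²` with the Euclidean norm. -/
abbrev E2 : Type := EuclideanSpace ℝ (Fin 2)

/-- The point `(a, b)` of `ℝ²`. -/
def pt (a b : ℝ) : E2 := !₂[a, b]

/-- The `n`th quantization error of a Borel probability measure `P` on `ℝ²`:
the infimum of `∫ min_{a ∈ α} ‖x - a‖² dP(x)` over all (nonempty) finite sets
`α ⊆ ℝ²` with at most `n` elements. -/
def quantErr (P : Measure E2) (n : ℕ) : ℝ :=
  sInf {v : ℝ | ∃ α : Set E2, α.Finite ∧ α.Nonempty ∧ α.ncard ≤ n ∧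
    v = ∫ x, sInf ((fun a => ‖x - a‖ ^ 2) '' α) ∂P}

/-- `α` is an optimal set of `n`-means for `P` if it attains the `n`th
quantization error. -/
def IsOptimalSet (P : Measure E2) (n : ℕ) (α : Set E2) : Prop :=
  α.Finite ∧ α.Nonempty ∧ α.ncard ≤ n ∧
    (∫ x, sInf ((fun a => ‖x - a‖ ^ 2) '' α) ∂P) = quantErr P n

/-- The boundary `L` of the regular hexagon with vertices `O(0,0)`, `A₁(1,0)`,
`A₂(3/2,√3/2)`, `A₃(1,√3)`, `A₄(0,√3)`, `A₅(-1/2,√3/2)`. -/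
def hexL : Set E2 :=
  segment ℝ (pt 0 0) (pt 1 0) ∪ segment ℝ (pt 1 0) (pt (3/2) (Real.sqrt 3/2)) ∪
  segment ℝ (pt (3/2) (Real.sqrt 3/2)) (pt 1 (Real.sqrt 3)) ∪
  segment ℝ (pt 1 (Real.sqrt 3)) (pt 0 (Real.sqrt 3)) ∪
  segment ℝ (pt 0 (Real.sqrt 3)) (pt (-(1/2)) (Real.sqrt 3/2)) ∪
  segment ℝ (pt (-(1/2)) (Real.sqrt 3/2)) (pt 0 0)

/-- The uniform probability distribution on `hexL`: density `1/6` with respect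
to the one-dimensional Hausdorff (arc-length) measure on `hexL`. -/
def hexP : Measure E2 := (6 : ℝ≥0∞)⁻¹ • (μH[1] : Measure E2).restrict hexL

/-- Rotation of the plane about the center `(1/2, √3/2)` of the hexagon by
angle `θ`. -/
def rotHex (θ : ℝ) (x : E2) : E2 :=
  pt (1/2 + (x 0 - 1/2) * Real.cos θ - (x 1 - Real.sqrt 3 / 2) * Real.sin θ)
     (Real.sqrt 3 / 2 + (x 0 - 1/2) * Real.sin θ + (x 1 - Real.sqrt 3 / 2) * Real.cos θ)

/-- The set `γ = {(r + (2j-1)(1-2r)/(2(k-1)), 0) : j = 1, …, k-1}` of `k-1`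
points on the side `OA₁`; it is empty when `k = 1`. -/
def gam (k : ℕ) (r : ℝ) : Set E2 :=
  {p | ∃ j : ℕ, 1 ≤ j ∧ j ≤ k - 1 ∧
    p = pt (r + (2 * (j : ℝ) - 1) / (2 * ((k : ℝ) - 1)) * (1 - 2 * r)) 0}

/-!
The lower bound is weak duality. For a function `h` on `L` and any `n` centres,
`∫ min ‖x - c‖² dP ≥ ∫ h dP - ∑ ∫ (h - ‖x - c‖²)₊ dP`, the sum being over the centres `c`.
Take `h = 13r²/16`, lowered near each vertex by a quadratic dip whose depth makes a centre serving a
bent cell (two arms of length `r` at a vertex) gain exactly as much as one serving a straight cell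
(length `√13 r / 2` inside a side). As `13r²/16 < (1/2)²`, a centre gains on at most two adjacent
sides, and optimizing over the arms of its cell shows that no centre gains more than this common
value. The six bent and `6(k-1)` straight cells tile `L` exactly when `r (√13 (k-1) + 4) = 2`, and
then their centres attain the bound, with error `13r²/48`.
-/

open scoped InnerProductSpace

section Integrals

lemma integral_quadratic (a b c x y : ℝ) :
    ∫ t in x..y, (a + b * t + c * t ^ 2) =
      a * (y - x) + b * (y ^ 2 - x ^ 2) / 2 + c * (y ^ 3 - x ^ 3) / 3 := by
  rw [intervalIntegral.integral_add, intervalIntegral.integral_add,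
    intervalIntegral.integral_const, intervalIntegral.integral_const_mul,
    intervalIntegral.integral_const_mul, integral_id, integral_pow, smul_eq_mul]
  · push_cast
    ring
  all_goals exact Continuous.intervalIntegrable (by fun_prop) _ _

lemma integral_max_zero_le_integral {f : ℝ → ℝ} (hf : Continuous f) {a b x y : ℝ} (hab : a ≤ b)
    (hxy : x ≤ y) (hnonneg : ∀ t ∈ Set.Icc x y, 0 ≤ f t)
    (hnonpos : ∀ t ∈ Set.Icc a b, t ∉ Set.Icc x y → f t ≤ 0) :
    ∫ t in a..b, max (f t) 0 ≤ ∫ t in x..y, f t := by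
  have integrableOn_f : IntegrableOn f (Set.Icc x y) := hf.continuousOn.integrableOn_Icc
  have le_indicator : ∀ t ∈ Set.Icc a b, max (f t) 0 ≤ (Set.Icc x y).indicator f t := by
    intro t ht
    by_cases hxyt : t ∈ Set.Icc x y
    · simp [hxyt, hnonneg t hxyt]
    · simp [hxyt, hnonpos t ht hxyt]
  rw [intervalIntegral.integral_of_le hab, ← integral_Icc_eq_integral_Ioc,
    intervalIntegral.integral_of_le hxy, ← integral_Icc_eq_integral_Ioc]
  calc ∫ t in Set.Icc a b, max (f t) 0
      ≤ ∫ t in Set.Icc a b, (Set.Icc x y).indicator f t :=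
        setIntegral_mono_on (Continuous.continuousOn (by fun_prop)).integrableOn_Icc
          (integrableOn_f.integrable_indicator measurableSet_Icc).integrableOn
          measurableSet_Icc le_indicator
    _ = ∫ t in Set.Icc a b ∩ Set.Icc x y, f t := setIntegral_indicator measurableSet_Icc
    _ ≤ ∫ t in Set.Icc x y, f t :=
        setIntegral_mono_set integrableOn_f
          ((ae_restrict_iff' measurableSet_Icc).2 (.of_forall hnonneg))
          Set.inter_subset_right.eventuallyLE

lemma integral_max_sq_sub_sq_le {u a b : ℝ} (hu : 0 ≤ u) (hab : a ≤ b) (p : ℝ) :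
    ∫ t in a..b, max (u ^ 2 - (t - p) ^ 2) 0 ≤ 4 / 3 * u ^ 3 := by
  have hle : ∫ t in a..b, max (u ^ 2 - (t - p) ^ 2) 0 ≤
      ∫ t in (p - u)..(p + u), (u ^ 2 - (t - p) ^ 2) := by
    refine integral_max_zero_le_integral (by fun_prop) hab (by linarith) ?_ ?_
    · rintro t ⟨h₁, h₂⟩
      exact sub_nonneg.2 (sq_le_sq' (by linarith) (by linarith))
    · intro t _ ht
      refine sub_nonpos.2 (sq_le_sq.2 ?_)
      rw [abs_of_nonneg hu]
      contrapose! ht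
      constructor <;> linarith [abs_lt.1 ht]
  refine hle.trans_eq ?_
  rw [intervalIntegral.integral_comp_sub_right (fun t ↦ u ^ 2 - t ^ 2),
    intervalIntegral.integral_sub (by simp) (Continuous.intervalIntegrable (by fun_prop) _ _),
    intervalIntegral.integral_const, integral_pow, smul_eq_mul]
  push_cast
  ring

lemma concaveOn_quadratic (a b : ℝ) {c : ℝ} (hc : c ≤ 0) :
    ConcaveOn ℝ Set.univ fun t : ℝ ↦ a + b * t + c * t ^ 2 := by
  refine ⟨convex_univ, fun x _ y _ s t hs ht hst ↦ ?_⟩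
  obtain rfl : t = 1 - s := by linarith
  simp only [smul_eq_mul]
  nlinarith [mul_nonneg (mul_nonneg hs ht) (mul_nonneg (neg_nonneg.2 hc) (sq_nonneg (x - y)))]

lemma exists_sign_change_of_concaveOn {f : ℝ → ℝ} (hf : Continuous f)
    (hconc : ConcaveOn ℝ Set.univ f) {a b : ℝ} (hab : a ≤ b) (ha : 0 ≤ f a)
    (hb : ∀ t, b ≤ t → f t ≤ 0) :
    ∃ y ∈ Set.Icc a b, (∀ t ∈ Set.Icc a y, 0 ≤ f t) ∧ ∀ t, y < t → f t ≤ 0 := by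
  obtain ⟨y, ⟨hy, hfy⟩, hmax⟩ :=
    (isCompact_Icc.inter_right (isClosed_le continuous_const hf)).exists_isGreatest
      (s := Set.Icc a b ∩ {t | 0 ≤ f t}) ⟨a, Set.left_mem_Icc.2 hab, ha⟩
  refine ⟨y, hy, fun t ht ↦ ?_, fun t hyt ↦ ?_⟩
  · exact (le_min ha hfy).trans (hconc.min_le_of_mem_Icc trivial trivial ht)
  · by_contra! hft
    rcases le_total t b with htb | hbt
    · exact hyt.not_ge (hmax ⟨⟨hy.1.trans hyt.le, htb⟩, hft.le⟩)
    · exact hft.not_ge (hb t hbt)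

end Integrals

section Corner

/-- The gain of a straight optimal cell at unit scale: the integral of `13 / 16 - t ^ 2` over the
interval where it is positive. -/
def cellGain : ℝ := 13 * √13 / 48

/-- The depth of the dip of the dual potential at a corner. It is the value for which an optimal
bent cell, with two arms of length `1`, has the same gain as a straight one. -/
def dipDepth : ℝ := 13 / 8 - 13 * √13 / 32

/-- The amount by which the dual potential at unit scale is lowered at distance `t` from a
corner. -/
def cornerDip (t : ℝ) : ℝ := max 0 (dipDepth * (1 - 4 * t ^ 2))

/-- The gain, at unit scale, collected on a ray of length `l` issuing from a corner by a centre at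
squared distance `N` from that corner whose projection to the ray has abscissa `p`: such a centre
is at squared distance `N - 2 t p + t ^ 2` from the point of abscissa `t`. -/
def rayGain (l N p : ℝ) : ℝ :=
  ∫ t in (0 : ℝ)..l, max (13 / 16 - cornerDip t - (N - 2 * t * p + t ^ 2)) 0

lemma sq_sqrt_thirteen : √13 ^ 2 = 13 := Real.sq_sqrt (by norm_num)

lemma cellGain_eq : cellGain = 4 / 3 * (√13 / 4) ^ 3 := by
  rw [cellGain]
  linear_combination -√13 / 48 * sq_sqrt_thirteen

lemma cellGain_nonneg : 0 ≤ cellGain := by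
  unfold cellGain
  positivity

lemma lt_dipDepth : 4 / 25 < dipDepth := by
  have : √13 < 3.6056 := (Real.sqrt_lt' (by norm_num)).2 (by norm_num)
  rw [dipDepth]
  linarith

lemma dipDepth_lt : dipDepth < 13 / 80 := by
  have : 3.6 < √13 := Real.lt_sqrt_of_sq_lt (by norm_num)
  rw [dipDepth]
  linarith

lemma continuous_cornerDip : Continuous cornerDip := by
  unfold cornerDip
  fun_prop

lemma cornerDip_nonneg (t : ℝ) : 0 ≤ cornerDip t := le_max_left _ _

lemma le_cornerDip (t : ℝ) : dipDepth * (1 - 4 * t ^ 2) ≤ cornerDip t := le_max_right _ _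

lemma cornerDip_zero : cornerDip 0 = dipDepth := by
  have := lt_dipDepth
  rw [cornerDip, max_eq_right] <;> linarith

lemma cornerDip_eq_of_mem_Icc {t : ℝ} (ht : t ∈ Set.Icc 0 (1 / 2)) :
    cornerDip t = dipDepth * (1 - 4 * t ^ 2) :=
  max_eq_right (mul_nonneg (by linarith [lt_dipDepth]) (by nlinarith [ht.1, ht.2]))

lemma cornerDip_eq_zero {t : ℝ} (ht : 1 / 2 ≤ t) : cornerDip t = 0 :=
  max_eq_left (mul_nonpos_of_nonneg_of_nonpos (by linarith [lt_dipDepth]) (by nlinarith))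

lemma integral_cornerDip_of_le_half {y : ℝ} (hy : y ∈ Set.Icc 0 (1 / 2)) :
    ∫ t in (0 : ℝ)..y, cornerDip t = dipDepth * (y - 4 / 3 * y ^ 3) := by
  have hcongr : ∫ t in (0 : ℝ)..y, cornerDip t =
      ∫ t in (0 : ℝ)..y, (dipDepth + 0 * t + -4 * dipDepth * t ^ 2) := by
    refine intervalIntegral.integral_congr fun t ht ↦ ?_
    rw [Set.uIcc_of_le hy.1] at ht
    simp only [cornerDip_eq_of_mem_Icc ⟨ht.1, ht.2.trans hy.2⟩]
    ring
  rw [hcongr, integral_quadratic]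
  ring

lemma integral_cornerDip_of_half_le {y : ℝ} (hy : 1 / 2 ≤ y) :
    ∫ t in (0 : ℝ)..y, cornerDip t = dipDepth / 3 := by
  have htail : ∫ t in (1 / 2 : ℝ)..y, cornerDip t = 0 := by
    refine intervalIntegral.integral_zero_ae (.of_forall fun t ht ↦ ?_)
    rw [Set.uIoc_of_le hy] at ht
    exact cornerDip_eq_zero ht.1.le
  rw [← intervalIntegral.integral_add_adjacent_intervals (b := 1 / 2)
    (continuous_cornerDip.intervalIntegrable _ _) (continuous_cornerDip.intervalIntegrable _ _),
    htail, integral_cornerDip_of_le_half (by norm_num)]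
  ring

lemma le_integral_cornerDip {y : ℝ} (hy : 0 ≤ y) :
    dipDepth / 3 * min 1 (2 * y) ≤ ∫ t in (0 : ℝ)..y, cornerDip t := by
  have hdip := lt_dipDepth
  rcases le_total y (1 / 2) with hle | hge
  · rw [integral_cornerDip_of_le_half ⟨hy, hle⟩, min_eq_right (by linarith)]
    have : 0 ≤ dipDepth * (y * (1 / 4 - y ^ 2)) :=
      mul_nonneg (by linarith) (mul_nonneg hy (by nlinarith))
    linarith
  · rw [integral_cornerDip_of_half_le hge, min_eq_left (by linarith), mul_one]

lemma concaveOn_rayIntegrand (N p : ℝ) :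
    ConcaveOn ℝ Set.univ fun t ↦ 13 / 16 - cornerDip t - (N - 2 * t * p + t ^ 2) := by
  have hdip := dipDepth_lt
  have hinf : (fun t ↦ 13 / 16 - cornerDip t - (N - 2 * t * p + t ^ 2)) =
      (fun t ↦ 13 / 16 - N + 2 * p * t + -1 * t ^ 2) ⊓
        fun t ↦ 13 / 16 - N - dipDepth + 2 * p * t + (4 * dipDepth - 1) * t ^ 2 := by
    ext t
    rw [Pi.inf_apply, cornerDip]
    rcases le_total 0 (dipDepth * (1 - 4 * t ^ 2)) with h | h
    · rw [max_eq_right h, inf_eq_right.2 (by linarith)]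
      ring
    · rw [max_eq_left h, inf_eq_left.2 (by linarith)]
      ring
  rw [hinf]
  exact (concaveOn_quadratic _ _ (by norm_num)).inf (concaveOn_quadratic _ _ (by linarith))

lemma continuous_rayIntegrand (N p : ℝ) :
    Continuous fun t ↦ 13 / 16 - cornerDip t - (N - 2 * t * p + t ^ 2) := by
  have := continuous_cornerDip
  fun_prop

lemma integral_rayIntegrand (N p y : ℝ) :
    ∫ t in (0 : ℝ)..y, (13 / 16 - cornerDip t - (N - 2 * t * p + t ^ 2)) =
      (13 / 16 - N) * y + p * y ^ 2 - y ^ 3 / 3 - ∫ t in (0 : ℝ)..y, cornerDip t := by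
  have hsplit : ∀ t, 13 / 16 - cornerDip t - (N - 2 * t * p + t ^ 2) =
      (13 / 16 - N + 2 * p * t + -1 * t ^ 2) - cornerDip t := fun t ↦ by ring
  simp only [hsplit]
  rw [intervalIntegral.integral_sub (Continuous.intervalIntegrable (by fun_prop) _ _)
    (continuous_cornerDip.intervalIntegrable _ _), integral_quadratic]
  ring

lemma exists_rayGain_le {l N p : ℝ} (hl : 0 ≤ l) (hN : N ≤ 13 / 16 - dipDepth) (hp : p ^ 2 ≤ N) :
    ∃ y ∈ Set.Icc (0 : ℝ) 2, rayGain l N p ≤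
      (13 / 16 - N) * y + p * y ^ 2 - y ^ 3 / 3 - dipDepth / 3 * min 1 (2 * y) := by
  have hp_lt : p < 19 / 20 := by nlinarith [lt_dipDepth]
  have hneg : ∀ t, 2 ≤ t → 13 / 16 - cornerDip t - (N - 2 * t * p + t ^ 2) ≤ 0 := by
    intro t ht
    nlinarith [cornerDip_nonneg t]
  obtain ⟨y, hy, hnonneg, hnonpos⟩ := exists_sign_change_of_concaveOn
    (continuous_rayIntegrand N p) (concaveOn_rayIntegrand N p) zero_le_two
    (by rw [cornerDip_zero]; linarith) hneg
  refine ⟨y, hy, ?_⟩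
  calc rayGain l N p
      ≤ ∫ t in (0 : ℝ)..y, (13 / 16 - cornerDip t - (N - 2 * t * p + t ^ 2)) :=
        integral_max_zero_le_integral (continuous_rayIntegrand N p) hl hy.1 hnonneg
          fun t ht hty ↦ hnonpos t (not_le.1 fun h ↦ hty ⟨ht.1, h⟩)
    _ ≤ _ := by
        rw [integral_rayIntegrand]
        exact sub_le_sub_left (le_integral_cornerDip hy.1) _

lemma rayGain_le_sqrt {l : ℝ} (hl : 0 ≤ l) (N p : ℝ) :
    rayGain l N p ≤ 4 / 3 * √(13 / 16 - N + p ^ 2) ^ 3 := by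
  refine le_trans ?_ (integral_max_sq_sub_sq_le (Real.sqrt_nonneg _) hl p)
  refine intervalIntegral.integral_mono_on hl
    (((continuous_rayIntegrand N p).max continuous_const).intervalIntegrable _ _)
    (Continuous.intervalIntegrable (by fun_prop) _ _) fun t _ ↦ max_le_max_right _ ?_
  have hsq : 13 / 16 - N + p ^ 2 ≤ √(13 / 16 - N + p ^ 2) ^ 2 := by
    rw [Real.sq_sqrt']
    exact le_max_left _ _
  linarith [cornerDip_nonneg t]

lemma rayGain_le_cellGain {l N p : ℝ} (hl : 0 ≤ l) (hp : p ^ 2 ≤ N) :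
    rayGain l N p ≤ cellGain := by
  have hsqrt : √(13 / 16 - N + p ^ 2) ≤ √13 / 4 := by
    refine Real.sqrt_le_iff.2 ⟨by positivity, ?_⟩
    rw [div_pow, sq_sqrt_thirteen]
    linarith
  rw [cellGain_eq]
  refine (rayGain_le_sqrt hl N p).trans ?_
  gcongr

lemma rayGain_eq_zero {l N p : ℝ} (hl : 0 ≤ l) (hN : 13 / 16 - dipDepth ≤ N) (hp : p ≤ 0) :
    rayGain l N p = 0 := by
  refine intervalIntegral.integral_zero_ae (.of_forall fun t ht ↦ max_eq_right ?_)
  rw [Set.uIoc_of_le hl] at ht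
  have h₁ : 0 ≤ t * -p := mul_nonneg ht.1.le (by linarith)
  have h₂ : 0 ≤ t ^ 2 * (1 - 4 * dipDepth) := mul_nonneg (sq_nonneg t) (by linarith [dipDepth_lt])
  linarith [le_cornerDip t]

-- The difference of the two sides is a sum of squares that vanishes when the centre is the
-- centroid of the bent cell with arms `y₁` and `y₂`.
lemma bentCell_moment_le {N p₁ p₂ : ℝ} (hN : 4 / 3 * (p₁ ^ 2 + p₂ ^ 2 + p₁ * p₂) ≤ N)
    (y₁ y₂ : ℝ) :
    (y₁ + y₂) * (-N * (y₁ + y₂) + (p₁ * y₁ ^ 2 - y₁ ^ 3 / 3) + (p₂ * y₂ ^ 2 - y₂ ^ 3 / 3)) ≤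
      -(y₁ + y₂) ^ 4 / 12 + (y₁ * y₂) ^ 2 / 4 := by
  have hN' := mul_le_mul_of_nonneg_right hN (sq_nonneg (y₁ + y₂))
  linarith [sq_nonneg ((p₁ + p₂) * (y₁ + y₂) - (y₁ ^ 2 + y₂ ^ 2) / 4),
    sq_nonneg ((p₁ - p₂) * (y₁ + y₂) - 3 * (y₁ ^ 2 - y₂ ^ 2) / 4)]

lemma straightCell_le_cellGain {w : ℝ} (hw : 0 ≤ w) : 13 / 16 * w - w ^ 3 / 12 ≤ cellGain := by
  have hfactor : 12 * (cellGain - (13 / 16 * w - w ^ 3 / 12)) = (w - √13 / 2) ^ 2 * (w + √13) := by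
    rw [cellGain]
    linear_combination (3 / 4 * w - √13 / 4) * sq_sqrt_thirteen
  have : 0 ≤ (w - √13 / 2) ^ 2 * (w + √13) := by positivity
  linarith

lemma bentCell_le_cellGain_of_half_le {y₁ y₂ : ℝ} (h₁ : 1 / 2 ≤ y₁) (h₂ : 1 / 2 ≤ y₂) :
    13 / 16 * (y₁ + y₂) ^ 2 - (y₁ + y₂) ^ 4 / 12 + (y₁ * y₂) ^ 2 / 4 ≤
      (y₁ + y₂) * (cellGain + dipDepth / 3 * (min 1 (2 * y₁) + min 1 (2 * y₂))) := by
  rw [min_eq_left (by linarith), min_eq_left (by linarith)]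
  have hgain : cellGain + dipDepth / 3 * (1 + 1) = 13 / 12 := by
    rw [cellGain, dipDepth]
    ring
  have hprod : (y₁ * y₂) ^ 2 ≤ ((y₁ + y₂) ^ 2 / 4) ^ 2 :=
    pow_le_pow_left₀ (by positivity) (by linarith [sq_nonneg (y₁ - y₂)]) 2
  have htangent : 0 ≤ (y₁ + y₂) * ((y₁ + y₂ - 2) ^ 2 * (y₁ + y₂ + 4)) := by positivity
  rw [hgain]
  linarith

lemma sq_mul_le_of_le_half {a b : ℝ} (ha : a ∈ Set.Icc 0 (1 / 2)) (hb : b ∈ Set.Icc (0 : ℝ) 2) :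
    (a * b) ^ 2 / 4 ≤ (a + b) * (dipDepth / 3 * (min 1 (2 * a) + min 1 (2 * b))) := by
  obtain ⟨ha₀, ha₁⟩ := ha
  obtain ⟨hb₀, hb₁⟩ := hb
  suffices h : (a * b) ^ 2 / 4 ≤ (a + b) * (4 / 75 * (min 1 (2 * a) + min 1 (2 * b))) by
    have hcoeff : 4 / 75 ≤ dipDepth / 3 := by linarith [lt_dipDepth]
    exact h.trans (mul_le_mul_of_nonneg_left (mul_le_mul_of_nonneg_right hcoeff (by positivity))
      (by positivity))
  rw [min_eq_right (by linarith : 2 * a ≤ 1)]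
  have hab : (a * b) ^ 2 ≤ a / 2 * b ^ 2 := by
    rw [mul_pow]
    gcongr
    nlinarith
  rcases le_total b (1 / 2) with hb₂ | hb₂
  · rw [min_eq_right (by linarith)]
    nlinarith [mul_nonneg ha₀ hb₀]
  · rw [min_eq_left (by linarith)]
    have h₁ := mul_nonneg (sub_nonneg.2 ha₁) (sub_nonneg.2 hb₂)
    have h₂ := mul_nonneg (mul_nonneg ha₀ (sub_nonneg.2 hb₁)) (sub_nonneg.2 hb₂)
    have h₃ := mul_nonneg ha₀ (sub_nonneg.2 hb₁)
    linarith [sq_nonneg (a - 1 / 2)]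

lemma bentCell_le_cellGain_of_le_half {y₁ y₂ : ℝ} (h₁ : y₁ ∈ Set.Icc 0 (1 / 2))
    (h₂ : y₂ ∈ Set.Icc (0 : ℝ) 2) :
    13 / 16 * (y₁ + y₂) ^ 2 - (y₁ + y₂) ^ 4 / 12 + (y₁ * y₂) ^ 2 / 4 ≤
      (y₁ + y₂) * (cellGain + dipDepth / 3 * (min 1 (2 * y₁) + min 1 (2 * y₂))) := by
  have hsum : 0 ≤ y₁ + y₂ := add_nonneg h₁.1 h₂.1
  have hstraight := mul_le_mul_of_nonneg_left (straightCell_le_cellGain hsum) hsum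
  linarith [sq_mul_le_of_le_half h₁ h₂]

lemma bentCell_le_cellGain {y₁ y₂ : ℝ} (h₁ : y₁ ∈ Set.Icc (0 : ℝ) 2)
    (h₂ : y₂ ∈ Set.Icc (0 : ℝ) 2) :
    13 / 16 * (y₁ + y₂) ^ 2 - (y₁ + y₂) ^ 4 / 12 + (y₁ * y₂) ^ 2 / 4 ≤
      (y₁ + y₂) * (cellGain + dipDepth / 3 * (min 1 (2 * y₁) + min 1 (2 * y₂))) := by
  rcases le_total y₁ (1 / 2) with hle₁ | hge₁
  · exact bentCell_le_cellGain_of_le_half ⟨h₁.1, hle₁⟩ h₂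
  rcases le_total y₂ (1 / 2) with hle₂ | hge₂
  · simpa only [add_comm, mul_comm y₁] using bentCell_le_cellGain_of_le_half ⟨h₂.1, hle₂⟩ h₁
  · exact bentCell_le_cellGain_of_half_le hge₁ hge₂

lemma rayGain_add_rayGain_le_of_near {l N p₁ p₂ : ℝ} (hl : 0 ≤ l) (hN : N ≤ 13 / 16 - dipDepth)
    (hp : 4 / 3 * (p₁ ^ 2 + p₂ ^ 2 + p₁ * p₂) ≤ N) :
    rayGain l N p₁ + rayGain l N p₂ ≤ cellGain := by
  obtain ⟨y₁, hy₁, hgain₁⟩ :=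
    exists_rayGain_le (p := p₁) hl hN (by linarith [sq_nonneg (p₁ + 2 * p₂)])
  obtain ⟨y₂, hy₂, hgain₂⟩ :=
    exists_rayGain_le (p := p₂) hl hN (by linarith [sq_nonneg (p₂ + 2 * p₁)])
  rcases (add_nonneg hy₁.1 hy₂.1).eq_or_lt with hsum | hsum
  · obtain rfl : y₁ = 0 := by linarith [hy₁.1, hy₂.1]
    obtain rfl : y₂ = 0 := by linarith
    norm_num at hgain₁ hgain₂
    linarith [cellGain_nonneg]
  · have hmoment := bentCell_moment_le hp y₁ y₂
    have hcell := bentCell_le_cellGain hy₁ hy₂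
    refine le_of_mul_le_mul_left ?_ hsum
    have hgain := mul_le_mul_of_nonneg_left (add_le_add hgain₁ hgain₂) hsum.le
    linarith

lemma pow_three_add_pow_three_le {u v L : ℝ} (hu : 0 ≤ u) (hv : 0 ≤ v) (hL : 0 ≤ L)
    (h : u ^ 2 + v ^ 2 ≤ L ^ 2) : u ^ 3 + v ^ 3 ≤ L ^ 3 := by
  have huL : u ≤ L := (sq_le_sq₀ hu hL).1 (by nlinarith)
  have hvL : v ≤ L := (sq_le_sq₀ hv hL).1 (by nlinarith)
  calc u ^ 3 + v ^ 3 = u * u ^ 2 + v * v ^ 2 := by ring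
    _ ≤ L * u ^ 2 + L * v ^ 2 := by gcongr
    _ = L * (u ^ 2 + v ^ 2) := by ring
    _ ≤ L * L ^ 2 := by gcongr
    _ = L ^ 3 := by ring

lemma rayGain_add_rayGain_le_of_far {l N p₁ p₂ : ℝ} (hl : 0 ≤ l) (hN : 13 / 16 - dipDepth ≤ N)
    (hp : 4 / 3 * (p₁ ^ 2 + p₂ ^ 2 + p₁ * p₂) ≤ N) :
    rayGain l N p₁ + rayGain l N p₂ ≤ cellGain := by
  have hp₁ : p₁ ^ 2 ≤ N := by linarith [sq_nonneg (p₁ + 2 * p₂)]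
  have hp₂ : p₂ ^ 2 ≤ N := by linarith [sq_nonneg (p₂ + 2 * p₁)]
  rcases le_or_gt p₁ 0 with hneg₁ | hpos₁
  · simpa [rayGain_eq_zero hl hN hneg₁] using rayGain_le_cellGain hl hp₂
  rcases le_or_gt p₂ 0 with hneg₂ | hpos₂
  · simpa [rayGain_eq_zero hl hN hneg₂] using rayGain_le_cellGain hl hp₁
  have hsum : √(13 / 16 - N + p₁ ^ 2) ^ 2 + √(13 / 16 - N + p₂ ^ 2) ^ 2 ≤ (√13 / 4) ^ 2 := by
    rw [Real.sq_sqrt', Real.sq_sqrt', div_pow, sq_sqrt_thirteen]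
    have := mul_pos hpos₁ hpos₂
    have := dipDepth_lt
    rcases max_cases (13 / 16 - N + p₁ ^ 2) 0 with h₁ | h₁ <;>
      rcases max_cases (13 / 16 - N + p₂ ^ 2) 0 with h₂ | h₂ <;> linarith
  have hcubes := pow_three_add_pow_three_le (Real.sqrt_nonneg _) (Real.sqrt_nonneg _)
    (by positivity) hsum
  rw [cellGain_eq]
  linarith [rayGain_le_sqrt hl N p₁, rayGain_le_sqrt hl N p₂]

lemma rayGain_add_rayGain_le {l N p₁ p₂ : ℝ} (hl : 0 ≤ l)
    (hp : 4 / 3 * (p₁ ^ 2 + p₂ ^ 2 + p₁ * p₂) ≤ N) :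
    rayGain l N p₁ + rayGain l N p₂ ≤ cellGain := by
  rcases le_total N (13 / 16 - dipDepth) with hN | hN
  · exact rayGain_add_rayGain_le_of_near hl hN hp
  · exact rayGain_add_rayGain_le_of_far hl hN hp

end Corner

section WeakDuality

lemma continuous_infDist_sq {X : Type*} [PseudoMetricSpace X] (s : Set X) :
    Continuous fun x ↦ Metric.infDist x s ^ 2 :=
  (Metric.continuous_infDist_pt s).pow 2

lemma sub_sum_max_le_infDist_sq {X : Type*} [PseudoMetricSpace X] {s : Finset X}
    (hs : s.Nonempty) (h : ℝ) (x : X) :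
    h - ∑ a ∈ s, max (h - dist x a ^ 2) 0 ≤ Metric.infDist x s ^ 2 := by
  obtain ⟨a, ha, hdist⟩ :=
    s.finite_toSet.isCompact.exists_infDist_eq_dist (Finset.coe_nonempty.2 hs) x
  have hle : max (h - dist x a ^ 2) 0 ≤ ∑ a ∈ s, max (h - dist x a ^ 2) 0 :=
    Finset.single_le_sum (f := fun a ↦ max (h - dist x a ^ 2) 0)
      (fun _ _ ↦ le_max_right _ _) ha
  rw [hdist]
  linarith [le_max_left (h - dist x a ^ 2) 0]

lemma sInf_image_norm_sub_sq {E : Type*} [SeminormedAddCommGroup E] {s : Set E}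
    (hs : IsCompact s) (hne : s.Nonempty) (x : E) :
    sInf ((fun a ↦ ‖x - a‖ ^ 2) '' s) = Metric.infDist x s ^ 2 := by
  obtain ⟨a, ha, hdist⟩ := hs.exists_infDist_eq_dist hne x
  refine IsLeast.csInf_eq ⟨⟨a, ha, by rw [hdist, dist_eq_norm]⟩, ?_⟩
  rintro _ ⟨b, hb, rfl⟩
  dsimp only
  rw [← dist_eq_norm]
  exact pow_le_pow_left₀ Metric.infDist_nonneg (Metric.infDist_le_dist_of_mem hb) 2

end WeakDuality

section SegmentGain

/-- The dual potential along a side of length `1`, as a function of arc length: the corner dips are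
scaled to cells whose arms have length `r` and placed at both ends of the side. -/
def sidePotential (r t : ℝ) : ℝ := r ^ 2 * (13 / 16 - cornerDip (t / r) - cornerDip ((1 - t) / r))

lemma continuous_sidePotential (r : ℝ) : Continuous (sidePotential r) := by
  have := continuous_cornerDip
  unfold sidePotential
  fun_prop

lemma sidePotential_one_sub (r t : ℝ) : sidePotential r (1 - t) = sidePotential r t := by
  rw [sidePotential, sidePotential, sub_sub_cancel, sub_right_comm]

lemma sidePotential_le (r t : ℝ) : sidePotential r t ≤ r ^ 2 * (13 / 16) :=
  mul_le_mul_of_nonneg_left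
    (by linarith [cornerDip_nonneg (t / r), cornerDip_nonneg ((1 - t) / r)]) (sq_nonneg r)

lemma integral_sidePotential {r : ℝ} (hr : 0 < r) (hr' : r ≤ 1) :
    ∫ t in (0 : ℝ)..1, sidePotential r t = 13 / 16 * r ^ 2 - 2 / 3 * dipDepth * r ^ 3 := by
  have hint : ∫ t in (0 : ℝ)..1, cornerDip (t / r) = r * (dipDepth / 3) := by
    rw [intervalIntegral.integral_comp_div _ hr.ne', zero_div, smul_eq_mul,
      integral_cornerDip_of_half_le (by rw [div_le_div_iff₀] <;> linarith)]
  have hint' : ∫ t in (0 : ℝ)..1, cornerDip ((1 - t) / r) = r * (dipDepth / 3) := by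
    rw [intervalIntegral.integral_comp_sub_left (fun t ↦ cornerDip (t / r)), sub_self, sub_zero,
      hint]
  have hcont := continuous_cornerDip
  simp only [sidePotential]
  rw [intervalIntegral.integral_const_mul, intervalIntegral.integral_sub,
    intervalIntegral.integral_sub, hint, hint', intervalIntegral.integral_const, smul_eq_mul]
  · ring
  all_goals exact Continuous.intervalIntegrable (by fun_prop) _ _

variable {E : Type*} [NormedAddCommGroup E] [InnerProductSpace ℝ E]

lemma inner_sq_add_inner_sq_le {d d' : E} (hd : ‖d‖ = 1) (hd' : ‖d'‖ = 1) (w : E) :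
    ⟪d, w⟫_ℝ ^ 2 + ⟪d', w⟫_ℝ ^ 2 - 2 * ⟪d, d'⟫_ℝ * ⟪d, w⟫_ℝ * ⟪d', w⟫_ℝ ≤
      (1 - ⟪d, d'⟫_ℝ ^ 2) * ‖w‖ ^ 2 := by
  have hdet := (Matrix.posSemidef_gram ℝ ![d, d', w]).det_nonneg
  simp only [Matrix.det_fin_three, Matrix.gram_apply, Matrix.cons_val, real_inner_self_eq_norm_sq,
    hd, hd', real_inner_comm d d', real_inner_comm d w, real_inner_comm d' w] at hdet
  linarith

lemma norm_lineMap_sub_sq (p q c : E) (t : ℝ) :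
    ‖AffineMap.lineMap p q t - c‖ ^ 2 =
      ‖c - p‖ ^ 2 - 2 * t * ⟪q - p, c - p⟫_ℝ + t ^ 2 * ‖q - p‖ ^ 2 := by
  have hsub : AffineMap.lineMap p q t - c = t • (q - p) - (c - p) := by
    rw [AffineMap.lineMap_apply_module']
    abel
  rw [hsub, norm_sub_sq_real, real_inner_smul_left, norm_smul, mul_pow, Real.norm_eq_abs, sq_abs]
  ring

/-- The gain collected by the centre `c` on the side `[p, q]`: the integral along the side of the
positive part of the dual potential minus the squared distance to `c`. -/
def segmentGain (r : ℝ) (p q c : E) : ℝ :=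
  ∫ t in (0 : ℝ)..1, max (sidePotential r t - ‖AffineMap.lineMap p q t - c‖ ^ 2) 0

lemma continuous_segmentGain_integrand (r : ℝ) (p q c : E) :
    Continuous fun t ↦ max (sidePotential r t - ‖AffineMap.lineMap p q t - c‖ ^ 2) 0 := by
  have := continuous_sidePotential r
  have := AffineMap.lineMap_continuous (R := ℝ) (p := p) (q := q)
  fun_prop

lemma segmentGain_comm (r : ℝ) (p q c : E) : segmentGain r p q c = segmentGain r q p c := by
  have hreflect := intervalIntegral.integral_comp_sub_left (a := 0) (b := 1)
    (fun t ↦ max (sidePotential r t - ‖AffineMap.lineMap p q t - c‖ ^ 2) 0) 1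
  simpa only [segmentGain, sidePotential_one_sub, AffineMap.lineMap_apply_one_sub, sub_self,
    sub_zero] using hreflect.symm

lemma segmentGain_le_rayGain {r : ℝ} (hr : 0 < r) {p q : E} (hpq : ‖q - p‖ = 1) (c : E) :
    segmentGain r p q c ≤ r ^ 3 * rayGain (1 / r) (‖c - p‖ ^ 2 / r ^ 2) (⟪q - p, c - p⟫_ℝ / r) := by
  set N := ‖c - p‖ ^ 2 / r ^ 2 with hN
  set x := ⟪q - p, c - p⟫_ℝ / r with hx
  have hscale : ∫ t in (0 : ℝ)..1,
      r ^ 2 * max (13 / 16 - cornerDip (t / r) - (N - 2 * (t / r) * x + (t / r) ^ 2)) 0 =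
        r ^ 3 * rayGain (1 / r) N x := by
    rw [intervalIntegral.integral_const_mul, intervalIntegral.integral_comp_div
      (fun t ↦ max (13 / 16 - cornerDip t - (N - 2 * t * x + t ^ 2)) 0) hr.ne', zero_div,
      smul_eq_mul, rayGain]
    ring
  have hdom := ((continuous_rayIntegrand N x).comp (continuous_id.div_const r)).max
    (continuous_const (y := (0 : ℝ)))
  rw [← hscale]
  refine intervalIntegral.integral_mono_on zero_le_one
    ((continuous_segmentGain_integrand r p q c).intervalIntegrable _ _)
    ((hdom.const_mul (r ^ 2)).intervalIntegrable _ _) fun t _ ↦ ?_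
  have hdist : ‖AffineMap.lineMap p q t - c‖ ^ 2 =
      r ^ 2 * (N - 2 * (t / r) * x + (t / r) ^ 2) := by
    rw [norm_lineMap_sub_sq, hpq, hN, hx]
    field_simp
  rw [mul_max_of_nonneg _ _ (sq_nonneg r), mul_zero, hdist, sidePotential, ← mul_sub]
  refine max_le_max_right _ (mul_le_mul_of_nonneg_left ?_ (sq_nonneg r))
  linarith [cornerDip_nonneg ((1 - t) / r)]

lemma segmentGain_add_segmentGain_le {r : ℝ} (hr : 0 < r) {v a b : E} (ha : ‖a - v‖ = 1)
    (hb : ‖b - v‖ = 1) (hab : ⟪a - v, b - v⟫_ℝ = -1 / 2) (c : E) :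
    segmentGain r v a c + segmentGain r v b c ≤ r ^ 3 * cellGain := by
  have hgram := inner_sq_add_inner_sq_le ha hb (c - v)
  rw [hab] at hgram
  have hproj : 4 / 3 * ((⟪a - v, c - v⟫_ℝ / r) ^ 2 + (⟪b - v, c - v⟫_ℝ / r) ^ 2 +
      ⟪a - v, c - v⟫_ℝ / r * (⟪b - v, c - v⟫_ℝ / r)) ≤ ‖c - v‖ ^ 2 / r ^ 2 := by
    field_simp
    linarith
  calc segmentGain r v a c + segmentGain r v b c
      ≤ r ^ 3 * (rayGain (1 / r) (‖c - v‖ ^ 2 / r ^ 2) (⟪a - v, c - v⟫_ℝ / r) +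
          rayGain (1 / r) (‖c - v‖ ^ 2 / r ^ 2) (⟪b - v, c - v⟫_ℝ / r)) := by
        rw [mul_add]
        exact add_le_add (segmentGain_le_rayGain hr ha c) (segmentGain_le_rayGain hr hb c)
    _ ≤ r ^ 3 * cellGain :=
        mul_le_mul_of_nonneg_left (rayGain_add_rayGain_le (by positivity) hproj) (by positivity)

lemma exists_norm_sub_sq_lt_of_segmentGain_ne_zero {r : ℝ} {p q c : E}
    (h : segmentGain r p q c ≠ 0) :
    ∃ x ∈ segment ℝ p q, ‖x - c‖ ^ 2 < r ^ 2 * (13 / 16) := by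
  contrapose! h
  refine intervalIntegral.integral_zero_ae (.of_forall fun t ht ↦ max_eq_right ?_)
  rw [Set.uIoc_of_le zero_le_one] at ht
  have hmem : AffineMap.lineMap p q t ∈ segment ℝ p q := by
    rw [segment_eq_image_lineMap]
    exact Set.mem_image_of_mem _ (Set.Ioc_subset_Icc_self ht)
  linarith [sidePotential_le r t, h _ hmem]

lemma integral_sidePotential_sub_sum_segmentGain_le (r : ℝ) (p q : E) {s : Finset E}
    (hs : s.Nonempty) :
    (∫ t in (0 : ℝ)..1, sidePotential r t) - ∑ c ∈ s, segmentGain r p q c ≤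
      ∫ t in (0 : ℝ)..1, Metric.infDist (AffineMap.lineMap p q t) (s : Set E) ^ 2 := by
  have hline := AffineMap.lineMap_continuous (R := ℝ) (p := p) (q := q)
  have hpot := continuous_sidePotential r
  have hgain := fun c ↦ continuous_segmentGain_integrand r p q c
  simp only [segmentGain]
  rw [← intervalIntegral.integral_finsetSum fun c _ ↦ (hgain c).intervalIntegrable _ _,
    ← intervalIntegral.integral_sub (hpot.intervalIntegrable _ _)
      (Continuous.intervalIntegrable (by fun_prop) _ _)]
  refine intervalIntegral.integral_mono_on zero_le_one
    (Continuous.intervalIntegrable (by fun_prop) _ _)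
    (((continuous_infDist_sq _).comp hline).intervalIntegrable _ _) fun t _ ↦ ?_
  simpa only [dist_eq_norm] using
    sub_sum_max_le_infDist_sq hs (sidePotential r t) (AffineMap.lineMap p q t)

end SegmentGain

section SegmentMeasure

variable {E : Type*} [NormedAddCommGroup E] [NormedSpace ℝ E] [MeasurableSpace E] [BorelSpace E]

lemma hausdorffMeasure_restrict_segment (p q : E) :
    (μH[1] : Measure E).restrict (segment ℝ p q) =
      nndist p q • (volume.restrict (Set.Icc (0 : ℝ) 1)).map (AffineMap.lineMap p q) := by
  have hline : Measurable (AffineMap.lineMap p q : ℝ → E) :=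
    AffineMap.lineMap_continuous.measurable
  ext s hs
  rw [Measure.restrict_apply hs, Measure.smul_apply, Measure.map_apply hline hs,
    Measure.restrict_apply (hline hs), segment_eq_image_lineMap, ← Set.image_preimage_inter,
    hausdorffMeasure_lineMap_image, hausdorffMeasure_real]

lemma integrableOn_segment {g : E → ℝ} (hg : Continuous g) (p q : E) :
    IntegrableOn g (segment ℝ p q) μH[1] := by
  have hline : Continuous (AffineMap.lineMap p q : ℝ → E) := AffineMap.lineMap_continuous
  rw [IntegrableOn, hausdorffMeasure_restrict_segment]
  refine Integrable.smul_measure_nnreal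
    ((integrable_map_measure hg.aestronglyMeasurable hline.aemeasurable).2 ?_)
  exact (hg.comp hline).continuousOn.integrableOn_Icc

lemma setIntegral_segment {g : E → ℝ} (hg : Continuous g) (p q : E) :
    ∫ x in segment ℝ p q, g x ∂μH[1] =
      dist p q * ∫ t in (0 : ℝ)..1, g (AffineMap.lineMap p q t) := by
  have hline : Continuous (AffineMap.lineMap p q : ℝ → E) := AffineMap.lineMap_continuous
  rw [hausdorffMeasure_restrict_segment, integral_smul_nnreal_measure,
    integral_map hline.aemeasurable hg.aestronglyMeasurable, integral_Icc_eq_integral_Ioc,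
    ← intervalIntegral.integral_of_le zero_le_one, NNReal.smul_def, coe_nndist, smul_eq_mul]

end SegmentMeasure

section Hexagon

/-- The vertices of the hexagon, in counterclockwise order. -/
def hexVertex : Fin 6 → E2 :=
  ![pt 0 0, pt 1 0, pt (3 / 2) (√3 / 2), pt 1 √3, pt 0 √3, pt (-(1 / 2)) (√3 / 2)]

/-- The `i`th side of the hexagon, as a vector; indices are taken modulo `6`. -/
def hexEdge (i : Fin 6) : E2 := hexVertex (i + 1) - hexVertex i

/-- The `i`th side of the hexagon, as a set of points; indices are taken modulo `6`. -/
def hexSide (i : Fin 6) : Set E2 := segment ℝ (hexVertex i) (hexVertex (i + 1))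

lemma pt_sub_pt (a b c d : ℝ) : pt a b - pt c d = pt (a - c) (b - d) := by
  ext i
  fin_cases i <;> simp [pt]

lemma inner_pt_pt (a b c d : ℝ) : ⟪pt a b, pt c d⟫_ℝ = a * c + b * d := by
  simp [pt, PiLp.inner_apply, Fin.sum_univ_two, mul_comm]

lemma hexVertex_succ (i : Fin 6) : hexVertex (i + 1) = hexVertex i + hexEdge i :=
  (add_sub_cancel _ _).symm

lemma hexEdge_eq : hexEdge = ![pt 1 0, pt (1 / 2) (√3 / 2), pt (-(1 / 2)) (√3 / 2), pt (-1) 0,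
    pt (-(1 / 2)) (-(√3 / 2)), pt (1 / 2) (-(√3 / 2))] := by
  funext i
  fin_cases i <;> simp [hexEdge, hexVertex, pt_sub_pt] <;> norm_num <;> ring_nf

lemma hexEdge_add_two (i : Fin 6) : hexEdge (i + 2) = hexEdge (i + 1) - hexEdge i := by
  rw [hexEdge_eq]
  fin_cases i <;> simp [pt_sub_pt] <;> norm_num

lemma norm_hexEdge (i : Fin 6) : ‖hexEdge i‖ = 1 := by
  rw [← sq_eq_sq₀ (norm_nonneg _) zero_le_one, ← real_inner_self_eq_norm_sq, hexEdge_eq]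
  fin_cases i <;> simp [inner_pt_pt, -inner_self_eq_norm_sq_to_K] <;> ring_nf <;> norm_num

lemma inner_hexEdge_succ (i : Fin 6) : ⟪hexEdge i, hexEdge (i + 1)⟫_ℝ = 1 / 2 := by
  rw [hexEdge_eq]
  fin_cases i <;> simp [inner_pt_pt] <;> ring_nf <;> norm_num

lemma hexL_eq_iUnion_hexSide : hexL = ⋃ i, hexSide i := by
  ext x
  simp [hexL, hexSide, hexVertex, Fin.exists_fin_succ, or_assoc]

lemma inner_hexEdge_add_two (i : Fin 6) : ⟪hexEdge i, hexEdge (i + 2)⟫_ℝ = -1 / 2 := by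
  rw [hexEdge_add_two, inner_sub_right, inner_hexEdge_succ, real_inner_self_eq_norm_sq,
    norm_hexEdge]
  norm_num

lemma mem_hexSide_iff {i : Fin 6} {x : E2} :
    x ∈ hexSide i ↔ ∃ t ∈ Set.Icc (0 : ℝ) 1, hexVertex i + t • hexEdge i = x := by
  rw [hexSide, segment_eq_image', Set.mem_image, hexEdge]

lemma le_norm_of_le_inner_hexEdge {i : Fin 6} {x : E2} {a : ℝ} (h : a ≤ ⟪hexEdge i, x⟫_ℝ) :
    a ≤ ‖x‖ := by
  simpa [norm_hexEdge] using h.trans (real_inner_le_norm _ _)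

lemma hexVertex_add_two (i : Fin 6) :
    hexVertex (i + 2) = hexVertex i + hexEdge i + hexEdge (i + 1) := by
  rw [← hexVertex_succ, ← hexVertex_succ, add_assoc]
  rfl

lemma one_le_norm_sub_of_mem_hexSide_add_two {i : Fin 6} {x y : E2} (hx : x ∈ hexSide i)
    (hy : y ∈ hexSide (i + 2)) : 1 ≤ ‖y - x‖ := by
  obtain ⟨t, ht, rfl⟩ := mem_hexSide_iff.1 hx
  obtain ⟨s, hs, rfl⟩ := mem_hexSide_iff.1 hy
  have hsub : hexVertex (i + 2) + s • hexEdge (i + 2) - (hexVertex i + t • hexEdge i) =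
      (1 - t - s) • hexEdge i + (1 + s) • hexEdge (i + 1) := by
    rw [hexVertex_add_two, hexEdge_add_two]
    module
  rw [hsub]
  refine le_norm_of_le_inner_hexEdge (i := i + 1) ?_
  rw [inner_add_right, inner_smul_right, inner_smul_right, real_inner_comm, inner_hexEdge_succ,
    real_inner_self_eq_norm_sq, norm_hexEdge]
  linarith [ht.2, hs.1]

lemma one_le_norm_sub_of_mem_hexSide_add_three {i : Fin 6} {x y : E2} (hx : x ∈ hexSide i)
    (hy : y ∈ hexSide (i + 3)) : 1 ≤ ‖y - x‖ := by
  obtain ⟨t, ht, rfl⟩ := mem_hexSide_iff.1 hx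
  obtain ⟨s, hs, rfl⟩ := mem_hexSide_iff.1 hy
  have hsub : hexVertex (i + 3) + s • hexEdge (i + 3) - (hexVertex i + t • hexEdge i) =
      (-t - s) • hexEdge i + (2 : ℝ) • hexEdge (i + 1) := by
    have hthree : i + 3 = i + 1 + 2 := by rw [add_assoc]; rfl
    have htwo : i + 1 + 1 = i + 2 := by rw [add_assoc]; rfl
    rw [hthree, hexVertex_add_two, hexEdge_add_two, hexVertex_succ, htwo, hexEdge_add_two]
    module
  rw [hsub]
  refine le_norm_of_le_inner_hexEdge (i := i + 1) ?_
  rw [inner_add_right, inner_smul_right, inner_smul_right, real_inner_comm, inner_hexEdge_succ,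
    real_inner_self_eq_norm_sq, norm_hexEdge]
  linarith [ht.2, hs.2]

lemma one_le_norm_sub_of_mem_hexSide {i j : Fin 6} (hij : i ≠ j) (hi : i ≠ j + 1)
    (hj : j ≠ i + 1) {x y : E2} (hx : x ∈ hexSide i) (hy : y ∈ hexSide j) : 1 ≤ ‖y - x‖ := by
  have hcases : ∀ i j : Fin 6, i ≠ j → i ≠ j + 1 → j ≠ i + 1 →
      j = i + 2 ∨ j = i + 3 ∨ i = j + 2 := by decide
  rcases hcases i j hij hi hj with rfl | rfl | rfl
  · exact one_le_norm_sub_of_mem_hexSide_add_two hx hy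
  · exact one_le_norm_sub_of_mem_hexSide_add_three hx hy
  · rw [norm_sub_rev]
    exact one_le_norm_sub_of_mem_hexSide_add_two hy hx

lemma hexSide_inter_hexSide_succ_subset (i : Fin 6) :
    hexSide i ∩ hexSide (i + 1) ⊆ {hexVertex (i + 1)} := by
  rintro x ⟨hx, hx'⟩
  obtain ⟨t, ht, rfl⟩ := mem_hexSide_iff.1 hx
  obtain ⟨s, hs, hst⟩ := mem_hexSide_iff.1 hx'
  have hzero : (1 - t) • hexEdge i + s • hexEdge (i + 1) = 0 := by
    rw [hexVertex_succ] at hst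
    rw [← sub_eq_zero.2 hst]
    module
  have hinner := congrArg (⟪hexEdge (i + 1), ·⟫_ℝ) hzero
  simp only [inner_add_right, inner_smul_right, real_inner_comm (hexEdge i), inner_hexEdge_succ,
    real_inner_self_eq_norm_sq, norm_hexEdge, inner_zero_right] at hinner
  obtain rfl : t = 1 := by linarith [ht.2, hs.1]
  rw [one_smul, ← hexVertex_succ]
  rfl

lemma pairwise_aedisjoint_hexSide :
    Pairwise (Function.onFun (AEDisjoint (μH[1] : Measure E2)) hexSide) := by
  have hnull := Measure.nullSingletonClass_hausdorff E2 zero_lt_one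
  have hadj : ∀ i, AEDisjoint (μH[1] : Measure E2) (hexSide i) (hexSide (i + 1)) := fun i ↦
    measure_mono_null (hexSide_inter_hexSide_succ_subset i) (measure_singleton _)
  intro i j hij
  by_cases hj : j = i + 1
  · subst hj
    exact hadj i
  by_cases hi : i = j + 1
  · subst hi
    exact (hadj j).symm
  refine (Set.disjoint_left.2 fun x hx hx' ↦ ?_).aedisjoint
  simpa using (one_le_norm_sub_of_mem_hexSide hij hi hj hx hx').trans_lt' zero_lt_one

lemma integral_hexP {g : E2 → ℝ} (hg : Continuous g) :
    ∫ x, g x ∂hexP = (1 / 6) *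
      ∑ i, ∫ t in (0 : ℝ)..1, g (AffineMap.lineMap (hexVertex i) (hexVertex (i + 1)) t) := by
  have hclosed : ∀ i, NullMeasurableSet (hexSide i) (μH[1] : Measure E2) := fun i ↦ by
    rw [hexSide, segment_eq_image_lineMap]
    exact ((isCompact_Icc.image AffineMap.lineMap_continuous).measurableSet).nullMeasurableSet
  have hint : IntegrableOn g (⋃ i, hexSide i) μH[1] :=
    integrableOn_finite_iUnion.2 fun i ↦ integrableOn_segment hg _ _
  have hlength : ∀ i, dist (hexVertex i) (hexVertex (i + 1)) = 1 := fun i ↦ by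
    rw [dist_comm, dist_eq_norm]
    exact norm_hexEdge i
  rw [hexP, integral_smul_measure, hexL_eq_iUnion_hexSide,
    integral_iUnion_ae hclosed pairwise_aedisjoint_hexSide hint, tsum_fintype]
  simp [hexSide, setIntegral_segment hg, hlength]

lemma sum_le_of_adjacent_of_nonadjacent {b : Fin 6 → ℝ} {M : ℝ} (hadj : ∀ i, b i + b (i + 1) ≤ M)
    (hfar : ∀ i j, i ≠ j → i ≠ j + 1 → j ≠ i + 1 → b i ≠ 0 → b j = 0) : ∑ i, b i ≤ M := by
  obtain ⟨i, hi⟩ : ∃ i, ∀ j, j ∉ ({i, i + 1} : Finset (Fin 6)) → b j = 0 := by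
    by_cases hb : ∀ j, b j = 0
    · exact ⟨0, fun j _ ↦ hb j⟩
    push Not at hb
    obtain ⟨i, hi⟩ := hb
    by_cases hsucc : b (i + 1) = 0
    · refine ⟨i - 1, fun j hj ↦ ?_⟩
      simp only [sub_add_cancel, Finset.mem_insert, Finset.mem_singleton, not_or] at hj
      by_cases hji : j = i + 1
      · rwa [hji]
      · exact hfar i j (Ne.symm hj.2) (fun h ↦ hj.1 (eq_sub_of_add_eq h.symm)) hji hi
    · refine ⟨i, fun j hj ↦ ?_⟩
      simp only [Finset.mem_insert, Finset.mem_singleton, not_or] at hj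
      by_cases hij : i = j + 1
      · have hne : j ≠ i + 1 + 1 := by
          rw [hij, add_assoc, add_assoc, ne_eq, left_eq_add]
          decide
        exact hfar (i + 1) j (Ne.symm hj.2) (fun h ↦ hj.1 (add_right_cancel h).symm) hne hsucc
      · exact hfar i j (Ne.symm hj.1) hij hj.2 hi
  rw [← Finset.sum_subset (Finset.subset_univ {i, i + 1}) fun j _ hj ↦ hi j hj,
    Finset.sum_pair (by simp)]
  exact hadj i

lemma segmentGain_add_segmentGain_succ_le {r : ℝ} (hr : 0 < r) (c : E2) (i : Fin 6) :
    segmentGain r (hexVertex i) (hexVertex (i + 1)) c +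
      segmentGain r (hexVertex (i + 1)) (hexVertex (i + 1 + 1)) c ≤ r ^ 3 * cellGain := by
  have hneg : hexVertex i - hexVertex (i + 1) = -hexEdge i := (neg_sub _ _).symm
  have hpos : hexVertex (i + 1 + 1) - hexVertex (i + 1) = hexEdge (i + 1) := rfl
  rw [segmentGain_comm]
  refine segmentGain_add_segmentGain_le hr ?_ ?_ ?_ c
  · rw [hneg, norm_neg, norm_hexEdge]
  · rw [hpos, norm_hexEdge]
  · rw [hneg, hpos, inner_neg_left, inner_hexEdge_succ]
    norm_num

lemma segmentGain_eq_zero_of_nonadjacent {r : ℝ} (hr : 0 < r) (hr' : r ≤ 1 / 2) {c : E2}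
    {i j : Fin 6} (hij : i ≠ j) (hi : i ≠ j + 1) (hj : j ≠ i + 1)
    (hgain : segmentGain r (hexVertex i) (hexVertex (i + 1)) c ≠ 0) :
    segmentGain r (hexVertex j) (hexVertex (j + 1)) c = 0 := by
  by_contra hgain'
  have hlt : ∀ x : E2, ‖x - c‖ ^ 2 < r ^ 2 * (13 / 16) → ‖x - c‖ < 1 / 2 := fun x hx ↦
    lt_of_pow_lt_pow_left₀ 2 (by norm_num) (by nlinarith)
  obtain ⟨x, hx, hxc⟩ := exists_norm_sub_sq_lt_of_segmentGain_ne_zero hgain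
  obtain ⟨y, hy, hyc⟩ := exists_norm_sub_sq_lt_of_segmentGain_ne_zero hgain'
  have htriangle : ‖y - x‖ ≤ ‖y - c‖ + ‖x - c‖ := by
    simpa only [sub_sub_sub_cancel_right] using norm_sub_le (y - c) (x - c)
  linarith [one_le_norm_sub_of_mem_hexSide hij hi hj hx hy, hlt x hxc, hlt y hyc]

lemma sum_segmentGain_le {r : ℝ} (hr : 0 < r) (hr' : r ≤ 1 / 2) (c : E2) :
    ∑ i, segmentGain r (hexVertex i) (hexVertex (i + 1)) c ≤ r ^ 3 * cellGain :=
  sum_le_of_adjacent_of_nonadjacent (segmentGain_add_segmentGain_succ_le hr c)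
    fun _ _ ↦ segmentGain_eq_zero_of_nonadjacent hr hr'

theorem le_integral_infDist_sq_hexP {r : ℝ} (hr : 0 < r) (hr' : r ≤ 1 / 2) {s : Finset E2}
    (hs : s.Nonempty) :
    13 / 16 * r ^ 2 - 2 / 3 * dipDepth * r ^ 3 - s.card / 6 * (r ^ 3 * cellGain) ≤
      ∫ x, Metric.infDist x (s : Set E2) ^ 2 ∂hexP := by
  have hgain : ∑ i, ∑ c ∈ s, segmentGain r (hexVertex i) (hexVertex (i + 1)) c ≤
      s.card * (r ^ 3 * cellGain) := by
    rw [Finset.sum_comm, ← nsmul_eq_mul]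
    exact Finset.sum_le_card_nsmul _ _ _ fun c _ ↦ sum_segmentGain_le hr hr' c
  have hsides := Finset.sum_le_sum fun i (_ : i ∈ Finset.univ) ↦
    integral_sidePotential_sub_sum_segmentGain_le r (hexVertex i) (hexVertex (i + 1)) hs
  rw [Finset.sum_sub_distrib, Finset.sum_const, Finset.card_univ, Fintype.card_fin, nsmul_eq_mul,
    integral_sidePotential hr (by linarith)] at hsides
  rw [integral_hexP (continuous_infDist_sq _)]
  push_cast at hsides
  linarith

end Hexagon

section UpperBound

lemma integral_le_of_le_sq_sub {f : ℝ → ℝ} (hf : Continuous f) {x s : ℝ} (hs : 0 ≤ s) {m : ℕ}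
    (hle : ∀ j < m, ∀ t, f t ≤ (t - (x + (j + 1 / 2) * s)) ^ 2) :
    ∫ t in x..(x + m * s), f t ≤ m * (s ^ 3 / 12) := by
  have hcell : ∀ j < m, ∫ t in (x + j * s)..(x + (j + 1 : ℕ) * s), f t ≤ s ^ 3 / 12 := by
    intro j hj
    refine (intervalIntegral.integral_mono_on (by push_cast; linarith) (hf.intervalIntegrable _ _)
      (Continuous.intervalIntegrable (by fun_prop) _ _) fun t _ ↦ hle j hj t).trans_eq ?_
    rw [intervalIntegral.integral_comp_sub_right (fun t ↦ t ^ 2), integral_pow]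
    push_cast
    ring
  have hsum := intervalIntegral.sum_integral_adjacent_intervals (f := f) (μ := volume)
    (a := fun j : ℕ ↦ x + j * s) (n := m) fun j _ ↦ hf.intervalIntegrable _ _
  rw [Nat.cast_zero, zero_mul, add_zero] at hsum
  rw [← hsum, ← nsmul_eq_mul]
  simpa using Finset.sum_le_card_nsmul (Finset.range m) _ _ fun j hj ↦ hcell j (by simpa using hj)

lemma integral_le_of_le_corner {f : ℝ → ℝ} (hf : Continuous f) {r : ℝ} (hr : 0 ≤ r)
    (hle : ∀ t, f t ≤ t ^ 2 - t * r / 4 + r ^ 2 / 16) :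
    ∫ t in (0 : ℝ)..r, f t ≤ 13 / 48 * r ^ 3 := by
  calc ∫ t in (0 : ℝ)..r, f t
      ≤ ∫ t in (0 : ℝ)..r, (r ^ 2 / 16 + -(r / 4) * t + 1 * t ^ 2) :=
        intervalIntegral.integral_mono_on hr (hf.intervalIntegrable _ _)
          (Continuous.intervalIntegrable (by fun_prop) _ _) fun t _ ↦ by linarith [hle t]
    _ = 13 / 48 * r ^ 3 := by
        rw [integral_quadratic]
        ring

lemma integral_le_of_le_side {f : ℝ → ℝ} (hf : Continuous f) {r s : ℝ} {m : ℕ} (hr : 0 ≤ r)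
    (hs : 0 ≤ s) (hlength : 2 * r + m * s = 1)
    (hleft : ∀ t, f t ≤ t ^ 2 - t * r / 4 + r ^ 2 / 16)
    (hright : ∀ t, f (1 - t) ≤ t ^ 2 - t * r / 4 + r ^ 2 / 16)
    (hmiddle : ∀ j < m, ∀ t, f t ≤ (t - (r + (j + 1 / 2) * s)) ^ 2) :
    ∫ t in (0 : ℝ)..1, f t ≤ 13 / 24 * r ^ 3 + m * (s ^ 3 / 12) := by
  have hreflect : ∫ t in (r + m * s)..1, f t = ∫ t in (0 : ℝ)..r, f (1 - t) := by
    have hend : r + m * s = 1 - r := by linarith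
    rw [intervalIntegral.integral_comp_sub_left f, sub_zero, hend]
  rw [← intervalIntegral.integral_add_adjacent_intervals (hf.intervalIntegrable 0 (r + m * s))
    (hf.intervalIntegrable _ _), ← intervalIntegral.integral_add_adjacent_intervals
    (hf.intervalIntegrable 0 r) (hf.intervalIntegrable _ _), hreflect]
  linarith [integral_le_of_le_corner hf hr hleft, integral_le_of_le_sq_sub hf hs hmiddle,
    integral_le_of_le_corner (f := fun t ↦ f (1 - t)) (by fun_prop) hr hright]

end UpperBound

section HexMeans

/-- The centre of the bent cell at the `i`th vertex: it lies on the bisector of the angle there. -/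
def cornerCenter (r : ℝ) (i : Fin 6) : E2 := hexVertex i + (r / 4) • hexEdge (i + 1)

/-- The centre of the `j`th of the `m` straight cells of equal length into which the `i`th side
is divided once its ends of length `r` are removed. -/
def sideCenter (m : ℕ) (r : ℝ) (ij : Fin 6 × Fin m) : E2 :=
  AffineMap.lineMap (hexVertex ij.1) (hexVertex (ij.1 + 1))
    (r + (2 * (ij.2 : ℝ) + 1) / (2 * m) * (1 - 2 * r))

/-- The `6 (m + 1)` centres of the optimal configuration with `m` centres on each side. -/
def hexMeans (m : ℕ) (r : ℝ) : Set E2 :=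
  Set.range (cornerCenter r) ∪ Set.range (sideCenter m r)

lemma norm_lineMap_sub_cornerCenter_sq (r : ℝ) (i : Fin 6) (t : ℝ) :
    ‖AffineMap.lineMap (hexVertex i) (hexVertex (i + 1)) t - cornerCenter r i‖ ^ 2 =
      t ^ 2 - t * r / 4 + r ^ 2 / 16 := by
  have hedge : hexVertex (i + 1) - hexVertex i = hexEdge i := rfl
  rw [norm_lineMap_sub_sq, hedge, norm_hexEdge, cornerCenter, add_sub_cancel_left, norm_smul,
    norm_hexEdge, real_inner_smul_right, inner_hexEdge_succ, mul_one, Real.norm_eq_abs, sq_abs]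
  ring

lemma norm_lineMap_one_sub_sub_cornerCenter_succ_sq (r : ℝ) (i : Fin 6) (t : ℝ) :
    ‖AffineMap.lineMap (hexVertex i) (hexVertex (i + 1)) (1 - t) - cornerCenter r (i + 1)‖ ^ 2 =
      t ^ 2 - t * r / 4 + r ^ 2 / 16 := by
  have hedge : hexVertex i - hexVertex (i + 1) = -hexEdge i := (neg_sub _ _).symm
  have htwo : i + 1 + 1 = i + 2 := by rw [add_assoc]; rfl
  rw [AffineMap.lineMap_apply_one_sub, norm_lineMap_sub_sq, hedge, norm_neg, norm_hexEdge,
    cornerCenter, add_sub_cancel_left, norm_smul, norm_hexEdge, inner_neg_left,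
    real_inner_smul_right, htwo, inner_hexEdge_add_two, mul_one, Real.norm_eq_abs, sq_abs]
  ring

lemma norm_lineMap_sub_sideCenter_sq {m : ℕ} {r s : ℝ} (hlength : 2 * r + m * s = 1) (i : Fin 6)
    (j : Fin m) (t : ℝ) :
    ‖AffineMap.lineMap (hexVertex i) (hexVertex (i + 1)) t - sideCenter m r (i, j)‖ ^ 2 =
      (t - (r + (j + 1 / 2) * s)) ^ 2 := by
  have hm : (m : ℝ) ≠ 0 := Nat.cast_ne_zero.2 (Fin.pos j).ne'
  have hparam : r + (2 * (j : ℝ) + 1) / (2 * m) * (1 - 2 * r) = r + (j + 1 / 2) * s := by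
    rw [← hlength]
    field_simp
    ring
  rw [sideCenter, hparam, ← dist_eq_norm, dist_lineMap_lineMap, dist_comm (hexVertex i),
    dist_eq_norm (hexVertex (i + 1)), ← hexEdge, norm_hexEdge, mul_one, Real.dist_eq, sq_abs]

lemma finite_hexMeans (m : ℕ) (r : ℝ) : (hexMeans m r).Finite :=
  (Set.finite_range _).union (Set.finite_range _)

lemma nonempty_hexMeans (m : ℕ) (r : ℝ) : (hexMeans m r).Nonempty :=
  (Set.range_nonempty _).inl

lemma ncard_hexMeans_le (m : ℕ) (r : ℝ) : (hexMeans m r).ncard ≤ 6 * (m + 1) := by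
  have hcorner := Finite.card_range_le (cornerCenter r)
  have hside := Finite.card_range_le (sideCenter m r)
  rw [Nat.card_coe_set_eq] at hcorner hside
  refine (Set.ncard_union_le _ _).trans ((add_le_add hcorner hside).trans_eq ?_)
  rw [Nat.card_prod, Nat.card_fin, Nat.card_fin]
  ring

theorem integral_infDist_hexMeans_sq_le {m : ℕ} {r : ℝ} (hr : 0 ≤ r)
    (hlength : r * (√13 * m + 4) = 2) :
    ∫ x, Metric.infDist x (hexMeans m r) ^ 2 ∂hexP ≤ 13 / 48 * r ^ 2 := by
  set s := √13 / 2 * r with hs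
  have hlength' : 2 * r + m * s = 1 := by linear_combination hlength / 2 + m * hs
  have hle : ∀ (x a : E2), a ∈ hexMeans m r → Metric.infDist x (hexMeans m r) ^ 2 ≤ ‖x - a‖ ^ 2 :=
    fun x a ha ↦ by
      rw [← dist_eq_norm]
      exact pow_le_pow_left₀ Metric.infDist_nonneg (Metric.infDist_le_dist_of_mem ha) 2
  have hside : ∀ i : Fin 6, ∫ t in (0 : ℝ)..1, Metric.infDist
      (AffineMap.lineMap (hexVertex i) (hexVertex (i + 1)) t) (hexMeans m r) ^ 2 ≤
        13 / 24 * r ^ 3 + m * (s ^ 3 / 12) := fun i ↦ by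
    refine integral_le_of_le_side
      ((continuous_infDist_sq _).comp AffineMap.lineMap_continuous) hr (by positivity) hlength'
      (fun t ↦ ?_) (fun t ↦ ?_) fun j hj t ↦ ?_
    · exact (hle _ _ (.inl ⟨i, rfl⟩)).trans_eq (norm_lineMap_sub_cornerCenter_sq r i t)
    · exact (hle _ _ (.inl ⟨i + 1, rfl⟩)).trans_eq
        (norm_lineMap_one_sub_sub_cornerCenter_succ_sq r i t)
    · exact (hle _ _ (.inr ⟨(i, ⟨j, hj⟩), rfl⟩)).trans_eq
        (norm_lineMap_sub_sideCenter_sq hlength' i ⟨j, hj⟩ t)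
  have htotal : 13 / 24 * r ^ 3 + m * (s ^ 3 / 12) = 13 / 48 * r ^ 2 := by
    have hs_sq : s ^ 2 = 13 / 4 * r ^ 2 := by
      rw [hs]
      linear_combination r ^ 2 / 4 * sq_sqrt_thirteen
    linear_combination m * s / 12 * hs_sq + 13 / 48 * r ^ 2 * hlength'
  have hsum := Finset.sum_le_card_nsmul Finset.univ _ _ fun i _ ↦ hside i
  rw [Finset.card_univ, Fintype.card_fin, nsmul_eq_mul, htotal] at hsum
  rw [integral_hexP (continuous_infDist_sq _)]
  push_cast at hsum
  linarith

lemma isOptimalSet_and_quantErr_eq {P : Measure E2} {n : ℕ} {α : Set E2} {v : ℝ}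
    (hfin : α.Finite) (hne : α.Nonempty) (hcard : α.ncard ≤ n)
    (hle : ∫ x, Metric.infDist x α ^ 2 ∂P ≤ v)
    (hge : ∀ s : Finset E2, s.Nonempty → s.card ≤ n →
      v ≤ ∫ x, Metric.infDist x (s : Set E2) ^ 2 ∂P) :
    IsOptimalSet P n α ∧ quantErr P n = v := by
  have hlower : ∀ β : Set E2, β.Finite → β.Nonempty → β.ncard ≤ n →
      v ≤ ∫ x, sInf ((fun a ↦ ‖x - a‖ ^ 2) '' β) ∂P := by
    intro β hβ hβne hβcard
    obtain ⟨s, rfl⟩ := hβ.exists_finset_coe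
    rw [Set.ncard_coe_finset] at hβcard
    simpa only [sInf_image_norm_sub_sq hβ.isCompact hβne] using
      hge s (Finset.coe_nonempty.1 hβne) hβcard
  have hcost : ∫ x, sInf ((fun a ↦ ‖x - a‖ ^ 2) '' α) ∂P = v := by
    refine le_antisymm ?_ (hlower α hfin hne hcard)
    simpa only [sInf_image_norm_sub_sq hfin.isCompact hne] using hle
  have hquant : quantErr P n = v := by
    refine IsLeast.csInf_eq ⟨⟨α, hfin, hne, hcard, hcost.symm⟩, ?_⟩
    rintro _ ⟨β, hβ, hβne, hβcard, rfl⟩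
    exact hlower β hβ hβne hβcard
  exact ⟨⟨hfin, hne, hcard, hcost.trans hquant.symm⟩, hquant⟩

theorem isOptimalSet_hexMeans {m : ℕ} {r : ℝ} (hlength : r * (√13 * m + 4) = 2) :
    IsOptimalSet hexP (6 * (m + 1)) (hexMeans m r) ∧
      quantErr hexP (6 * (m + 1)) = 13 / 48 * r ^ 2 := by
  have hr : 0 < r := pos_of_mul_pos_left (hlength ▸ two_pos) (by positivity)
  have hr' : r ≤ 1 / 2 := by
    have : 0 ≤ r * (√13 * m) := by positivity
    linarith
  refine isOptimalSet_and_quantErr_eq (finite_hexMeans m r) (nonempty_hexMeans m r)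
    (ncard_hexMeans_le m r) (integral_infDist_hexMeans_sq_le hr.le hlength) fun s hs hcard ↦ ?_
  refine le_trans ?_ (le_integral_infDist_sq_hexP hr hr' hs)
  have hcard' : (s.card : ℝ) / 6 * (r ^ 3 * cellGain) ≤ (m + 1) * (r ^ 3 * cellGain) := by
    have : (s.card : ℝ) ≤ 6 * (m + 1) := by exact_mod_cast hcard
    have := cellGain_nonneg
    gcongr
    linarith
  have hvalue : 13 / 16 * r ^ 2 - 2 / 3 * dipDepth * r ^ 3 - (m + 1) * (r ^ 3 * cellGain) =
      13 / 48 * r ^ 2 := by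
    rw [dipDepth, cellGain]
    linear_combination -13 / 48 * r ^ 2 * hlength
  linarith

end HexMeans

section Coordinates

lemma range_cornerCenter (r : ℝ) :
    Set.range (cornerCenter r) = {pt (r / 8) (√3 * r / 8), pt (1 - r / 8) (√3 * r / 8),
      pt ((6 - r) / 4) (√3 / 2), pt (1 - r / 8) (-(√3 * (r - 8)) / 8),
      pt (r / 8) (-(√3 * (r - 8)) / 8), pt ((r - 2) / 4) (√3 / 2)} := by
  have hcenter : cornerCenter r = ![pt (r / 8) (√3 * r / 8), pt (1 - r / 8) (√3 * r / 8),
      pt ((6 - r) / 4) (√3 / 2), pt (1 - r / 8) (-(√3 * (r - 8)) / 8),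
      pt (r / 8) (-(√3 * (r - 8)) / 8), pt ((r - 2) / 4) (√3 / 2)] := by
    ext i j
    fin_cases i <;> fin_cases j <;> simp [cornerCenter, hexEdge_eq, hexVertex, pt] <;> ring
  simp only [hcenter, Matrix.range_cons, Matrix.range_empty, Set.union_empty, Set.singleton_union]

lemma rotHex_zero (x : E2) : rotHex 0 x = x := by
  ext i
  fin_cases i <;> simp [rotHex, pt]

lemma rotHex_add (θ φ : ℝ) (x : E2) : rotHex (θ + φ) x = rotHex θ (rotHex φ x) := by
  ext i
  fin_cases i <;> simp [rotHex, pt, cos_add, sin_add] <;> ring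

lemma rotHex_pi_div_three_lineMap (i : Fin 6) (t : ℝ) :
    rotHex (π / 3) (AffineMap.lineMap (hexVertex i) (hexVertex (i + 1)) t) =
      AffineMap.lineMap (hexVertex (i + 1)) (hexVertex (i + 1 + 1)) t := by
  have hsqrt : √3 ^ 2 = 3 := Real.sq_sqrt (by norm_num)
  ext j
  fin_cases i <;> fin_cases j <;>
    simp [rotHex, pt, hexVertex, AffineMap.lineMap_apply] <;> ring_nf <;>
    simp only [hsqrt] <;> ring

lemma rotHex_mul_pi_div_three_pt_zero (i : Fin 6) (t : ℝ) :
    rotHex ((i : ℕ) * π / 3) (pt t 0) =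
      AffineMap.lineMap (hexVertex i) (hexVertex (i + 1)) t := by
  induction i using Fin.induction with
  | zero =>
    rw [Fin.val_zero, Nat.cast_zero, zero_mul, zero_div, rotHex_zero]
    ext j
    fin_cases j <;> simp [pt, hexVertex, AffineMap.lineMap_apply]
  | succ i ih =>
    have hangle : ((i.succ : ℕ) : ℝ) * π / 3 = π / 3 + (i.castSucc : ℕ) * π / 3 := by
      rw [Fin.val_succ, Fin.val_castSucc]
      push_cast
      ring
    rw [hangle, rotHex_add, ih, rotHex_pi_div_three_lineMap, Fin.coeSucc_eq_succ]

lemma gam_succ (m : ℕ) (r : ℝ) :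
    gam (m + 1) r =
      Set.range fun j : Fin m ↦ pt (r + (2 * (j : ℝ) + 1) / (2 * m) * (1 - 2 * r)) 0 := by
  ext x
  constructor
  · rintro ⟨j, hj, hjm, rfl⟩
    obtain ⟨i, rfl⟩ := Nat.exists_eq_add_of_le' hj
    refine ⟨⟨i, by lia⟩, ?_⟩
    push_cast
    ring_nf
  · rintro ⟨j, rfl⟩
    refine ⟨j + 1, by lia, by lia, ?_⟩
    push_cast
    ring_nf

lemma gam_union_iUnion_rotHex_image_gam (m : ℕ) (r : ℝ) :
    gam (m + 1) r ∪ ⋃ i ∈ Finset.Icc (1 : ℕ) 5, rotHex (i * π / 3) '' gam (m + 1) r =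
      Set.range (sideCenter m r) := by
  have himage (i : Fin 6) : rotHex ((i : ℕ) * π / 3) '' gam (m + 1) r =
      Set.range fun j ↦ sideCenter m r (i, j) := by
    rw [gam_succ, ← Set.range_comp]
    exact congrArg Set.range (funext fun j ↦ rotHex_mul_pi_div_three_pt_zero i _)
  have hrange : Set.range (sideCenter m r) =
      ⋃ i : Fin 6, rotHex ((i : ℕ) * π / 3) '' gam (m + 1) r := by
    ext x
    simp only [himage, Set.mem_iUnion, Set.mem_range, Prod.exists]
  have hzero : gam (m + 1) r = rotHex ((0 : ℕ) * π / 3) '' gam (m + 1) r := by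
    simp [funext rotHex_zero]
  ext x
  simp only [hrange, Set.mem_union, Set.mem_iUnion, Finset.mem_Icc, Fin.exists_iff, exists_prop]
  constructor
  · rintro (hx | ⟨i, hi, hx⟩)
    · exact ⟨0, by lia, hzero ▸ hx⟩
    · exact ⟨i, by lia, hx⟩
  · rintro ⟨i, hi, hx⟩
    rcases Nat.eq_zero_or_pos i with rfl | hpos
    · exact .inl (hzero ▸ hx)
    · exact .inr ⟨i, by lia, hx⟩

lemma sqrt_thirteen_mul_sub_four_ne_zero (m : ℕ) : √13 * m - 4 ≠ 0 := by
  intro h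
  have hsq : (13 * m ^ 2 : ℝ) = 16 := by
    rw [← sq_sqrt_thirteen, ← mul_pow, sub_eq_zero.1 h]
    norm_num
  have hnat : 13 * m ^ 2 = 16 := by exact_mod_cast hsq
  lia

lemma thirteen_mul_sq_sub_sixteen (x : ℝ) :
    13 * x ^ 2 - 16 = (√13 * x - 4) * (√13 * x + 4) := by
  linear_combination -x ^ 2 * sq_sqrt_thirteen

lemma cornerLength_mul_eq_two (m : ℕ) :
    2 * (√13 * m - 4) / (13 * (m : ℝ) ^ 2 - 16) * (√13 * m + 4) = 2 := by
  have hne := sqrt_thirteen_mul_sub_four_ne_zero m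
  have hpos : √13 * m + 4 ≠ 0 := by positivity
  rw [thirteen_mul_sq_sub_sixteen]
  field_simp

lemma thirteen_div_mul_cornerLength_sq (x : ℝ) :
    13 / 48 * (2 * (√13 * x - 4) / (13 * x ^ 2 - 16)) ^ 2 =
      13 * (13 * x ^ 2 - 8 * √13 * x + 16) / (12 * (16 - 13 * x ^ 2) ^ 2) := by
  have hsq : 13 * x ^ 2 - 8 * √13 * x + 16 = (√13 * x - 4) ^ 2 := by
    linear_combination -x ^ 2 * sq_sqrt_thirteen
  rw [hsq, ← neg_sub (13 * x ^ 2), neg_sq]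
  generalize 13 * x ^ 2 - 16 = d
  ring

end Coordinates

/-- For `n = 6k`, with `r = 2(√13(k-1)-4)/(13(k-1)²-16)`, the set
`αₙ = {(r/8, √3r/8), (1-r/8, √3r/8), ((6-r)/4, √3/2), (1-r/8, -√3(r-8)/8),
(r/8, -√3(r-8)/8), ((r-2)/4, √3/2)} ∪ γ ∪ ⋃_{i=1}^5 T_i(γ)` forms an optimal
set of `n`-means for the uniform distribution on the hexagon boundary, where
`T_i` is the rotation about the center by angle `iπ/3`, and
`Vₙ = 13(13(k-1)² - 8√13(k-1) + 16)/(12(16 - 13(k-1)²)²)`. -/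
theorem stmt_5 (k : ℕ) (hk : 1 ≤ k) (r : ℝ)
    (hr : r = 2 * (Real.sqrt 13 * ((k : ℝ) - 1) - 4) / (13 * ((k : ℝ) - 1) ^ 2 - 16)) :
    IsOptimalSet hexP (6 * k)
      (({pt (r/8) (Real.sqrt 3 * r / 8), pt (1 - r/8) (Real.sqrt 3 * r / 8),
          pt ((6 - r)/4) (Real.sqrt 3 / 2), pt (1 - r/8) (-(Real.sqrt 3 * (r - 8)) / 8),
          pt (r/8) (-(Real.sqrt 3 * (r - 8)) / 8), pt ((r - 2)/4) (Real.sqrt 3 / 2)} : Set E2)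
        ∪ gam k r ∪ ⋃ i ∈ Finset.Icc (1 : ℕ) 5, rotHex ((i : ℝ) * Real.pi / 3) '' gam k r) ∧
    quantErr hexP (6 * k) =
      13 * (13 * ((k : ℝ) - 1) ^ 2 - 8 * Real.sqrt 13 * ((k : ℝ) - 1) + 16) /
        (12 * (16 - 13 * ((k : ℝ) - 1) ^ 2) ^ 2) := by
  obtain ⟨m, rfl⟩ := Nat.exists_eq_add_of_le' hk
  have hm : ((m + 1 : ℕ) : ℝ) - 1 = m := by
    push_cast
    ring
  rw [hm] at hr ⊢
  have hlength : r * (√13 * m + 4) = 2 := hr ▸ cornerLength_mul_eq_two m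
  rw [Set.union_assoc, gam_union_iUnion_rotHex_image_gam, ← range_cornerCenter,
    ← thirteen_div_mul_cornerLength_sq, ← hr]
  exact isOptimalSet_hexMeans hlength
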